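/- Let m : 𝕋^ν → ℝ be a non-constant real analytic function. Then the set of n-tuples (f₁,…,f_n) of C^∞ functions on 𝕋^ν such that ∇m(p_k) ≠ ∇m(p_l) for all p_k ∈ supp f_k, p_l ∈ supp f_l, k ≠ l, spans a dense subspace of the n-fold symmetric tensor power of L²(𝕋^ν): symmetrized tensors (f₁⊗⋯⊗f_n)^{sym} over such tuples are total in Sym^n L²(𝕋^ν). -/

import Mathlib

open MeasureTheory

/-!
For a tuple of momenta, the condition that two components have equal velocity is the zero set of a
real analytic function that does not vanish identically, hence a null set. So almost every tuple
has pairwise distinct velocities, and by continuity so do all tuples near it.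

Given a continuous symmetric `G`, take a smooth partition of unity on the torus of small mesh,
multiply it with itself to get a partition of unity on tuples, and sample `G` at the centers,
keeping only the products whose factors have disjoint velocity sets. At each `p` the result is a
convex combination of values of `G` near `p` and of zeros. Hence it is bounded by `sup ‖G‖`, and as
the mesh tends to `0` it converges to `G p` whenever `p` has pairwise distinct velocities, since
eventually no product that is nonzero at `p` has been dropped. Symmetrization preserves both facts,
and bounded convergence gives convergence in `L^q` on the cube.
-/

open Filter Function Topology
open scoped ENNReal

variable {ι κ X E F : Type*}

section AnalyticZeroSet

variable [NormedAddCommGroup E] [NormedSpace ℝ E] [NormedAddCommGroup F] [NormedSpace ℝ F]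

theorem ae_add_smul_ne_zero_of_analyticAt {f : E → F} (hf : ∀ x, AnalyticAt ℝ f x) {x₀ : E}
    (h₀ : f x₀ ≠ 0) (v : E) : ∀ᵐ t : ℝ, f (x₀ + t • v) ≠ 0 := by
  have hline : AnalyticOnNhd ℝ (fun t : ℝ => f (x₀ + t • v)) Set.univ := fun t _ =>
    (hf _).fun_comp (f := fun t : ℝ => x₀ + t • v) (by fun_prop)
  have hcodiscrete := hline.preimage_zero_mem_codiscrete (x := 0) (by simpa using h₀)
  simpa [Set.preimage, Filter.Eventually] using
    ae_restrict_le_codiscreteWithin (μ := (volume : Measure ℝ)) MeasurableSet.univ hcodiscrete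

theorem ae_ne_zero_of_analyticAt [FiniteDimensional ℝ E] [MeasurableSpace E] [BorelSpace E]
    (μ : Measure E) [μ.IsAddHaarMeasure] {f : E → F} (hf : ∀ x, AnalyticAt ℝ f x) {x₀ : E}
    (h₀ : f x₀ ≠ 0) : ∀ᵐ x ∂μ, f x ≠ 0 := by
  have hcont : Continuous f := continuous_iff_continuousAt.2 fun x => (hf x).continuousAt
  have hmeas : MeasurableSet {z : E × ℝ | f (x₀ + z.2 • z.1) ≠ 0} :=
    (isOpen_ne_fun (by fun_prop) continuous_const).measurableSet
  have hswap : ∀ᵐ t : ℝ, ∀ᵐ v ∂μ, f (x₀ + t • v) ≠ 0 :=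
    (Measure.ae_ae_comm (p := fun v t => f (x₀ + t • v) ≠ 0) hmeas).1
      (Eventually.of_forall (ae_add_smul_ne_zero_of_analyticAt hf h₀))
  obtain ⟨t, ht, ht₀⟩ := (hswap.and (Measure.ae_ne volume 0)).exists
  have hnull : μ ((t • ·) ⁻¹' ((x₀ + ·) ⁻¹' {x | f x = 0})) = 0 := by
    simpa [ae_iff] using ht
  rw [Measure.addHaar_preimage_smul μ ht₀, measure_preimage_add, mul_eq_zero] at hnull
  simpa [ae_iff] using hnull.resolve_left (by simp [ht₀])

theorem ae_injective_comp_of_analyticAt [Fintype κ] [FiniteDimensional ℝ E] [MeasureSpace E]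
    [BorelSpace E] [(volume : Measure E).IsAddHaarMeasure] {V : E → F}
    (hV : ∀ x, AnalyticAt ℝ V x) (hne : ∃ x y, V x ≠ V y) :
    ∀ᵐ p : κ → E, Injective (V ∘ p) := by
  classical
  have : ProperSpace E := FiniteDimensional.proper ℝ E
  obtain ⟨x, y, hxy⟩ := hne
  have hpair : ∀ k l : κ, k ≠ l → ∀ᵐ p : κ → E, V (p k) - V (p l) ≠ 0 := by
    intro k l hkl
    have heval : ∀ (k : κ) (p : κ → E), AnalyticAt ℝ (fun p : κ → E => V (p k)) p := fun k p =>
      (hV _).fun_comp ((ContinuousLinearMap.proj (R := ℝ) (φ := fun _ : κ => E) k).analyticAt p)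
    exact ae_ne_zero_of_analyticAt volume (fun p => (heval k p).sub (heval l p))
      (x₀ := update (fun _ => y) k x) (by simpa [hkl.symm, sub_eq_zero] using hxy)
  filter_upwards [ae_all_iff.2 fun k => ae_all_iff.2 fun l => ae_all_iff.2 (hpair k l)]
    with p hp k l hkl
  by_contra hne
  exact hp k l hne (sub_eq_zero.2 hkl)

end AnalyticZeroSet

section IntPeriodic

/-- Periodicity under `ℤ^ι`: functions on the torus `(ℝ/ℤ)^ι` are encoded as `ℤ^ι`-periodic
functions on `ℝ^ι`. -/
def IntPeriodic (f : (ι → ℝ) → X) : Prop :=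
  ∀ (p : ι → ℝ) (l : ι → ℤ), f (fun i => p i + l i) = f p

variable [NormedAddCommGroup E]

theorem IntPeriodic.intPeriodic_fderiv [Finite ι] [NormedSpace ℝ E] {m : (ι → ℝ) → E}
    (hm : IntPeriodic m) : IntPeriodic (fderiv ℝ m) := by
  have := Fintype.ofFinite ι
  intro p l
  have htranslate : (fun x => m (x + fun i => (l i : ℝ))) = m := funext fun x => hm x l
  calc fderiv ℝ m (p + fun i => (l i : ℝ))
      = fderiv ℝ (fun x => m (x + fun i => (l i : ℝ))) p := (fderiv_comp_add_right _).symm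
    _ = fderiv ℝ m p := by rw [htranslate]

theorem IntPeriodic.exists_fderiv_ne [Finite ι] [NormedSpace ℝ E] {m : (ι → ℝ) → E}
    (hm : IntPeriodic m) (hd : Differentiable ℝ m) (hne : ∃ p q, m p ≠ m q) :
    ∃ p q, fderiv ℝ m p ≠ fderiv ℝ m q := by
  classical
  have := Fintype.ofFinite ι
  by_contra! hconst
  obtain ⟨p, q, hpq⟩ := hne
  set L := fderiv ℝ m 0
  have haffine : ∀ x y, m x - L x = m y - L y := by
    refine is_const_of_fderiv_eq_zero (𝕜 := ℝ) (f := fun x => m x - L x) (by fun_prop) fun x => ?_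
    rw [fderiv_fun_sub (hd x) (by fun_prop), ContinuousLinearMap.fderiv, hconst x 0, sub_self]
  have hbasis : ∀ i, L (Pi.single i 1) = 0 := by
    intro i
    have hperiod : m (Pi.single i 1) = m 0 := by
      rw [← hm 0 (Pi.single i 1)]
      congr 1
      ext j
      rcases eq_or_ne j i with rfl | hji <;> simp [*]
    simpa [hperiod] using haffine (Pi.single i 1) 0
  have hL : L = 0 :=
    ContinuousLinearMap.coe_injective ((Pi.basisFun ℝ ι).ext fun i => by simpa using hbasis i)
  exact hpq (by simpa [hL] using haffine p q)

theorem exists_norm_le_of_intPeriodic {G : (κ → ι → ℝ) → E} (hG : Continuous G)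
    (hGper : ∀ (p : κ → ι → ℝ) (l : κ → ι → ℤ), G (fun k i => p k i + l k i) = G p) :
    ∃ C, ∀ p, ‖G p‖ ≤ C := by
  obtain ⟨C, hC⟩ := (isCompact_Icc (a := (0 : κ → ι → ℝ)) (b := 1)).exists_bound_of_continuousOn
    hG.continuousOn
  refine ⟨C, fun p => ?_⟩
  have hfract := hGper (fun k i => Int.fract (p k i)) fun k i => ⌊p k i⌋
  simp only [Int.fract_add_floor] at hfract
  rw [hfract]
  exact hC _ ⟨fun k i => Int.fract_nonneg _, fun k i => (Int.fract_lt_one _).le⟩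

end IntPeriodic

section TorusGap

variable [Fintype ι]

/-- A smooth `ℤ^ι`-periodic substitute for the squared distance from `p` to `a + ℤ^ι`. -/
noncomputable def torusGap (a p : ι → ℝ) : ℝ :=
  ∑ i, (1 - Real.cos (2 * Real.pi * (p i - a i)))

theorem torusGap_self (a : ι → ℝ) : torusGap a a = 0 := by
  simp [torusGap]

theorem contDiff_torusGap (a : ι → ℝ) {n : WithTop ℕ∞} : ContDiff ℝ n (torusGap a) :=
  ContDiff.sum fun i _ => by fun_prop

theorem intPeriodic_torusGap (a : ι → ℝ) : IntPeriodic (torusGap a) := by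
  intro p l
  refine Finset.sum_congr rfl fun i _ => ?_
  rw [← Real.cos_add_int_mul_two_pi (2 * Real.pi * (p i - a i)) (l i)]
  ring_nf

theorem eight_mul_sub_round_sq_le (x : ℝ) :
    8 * (x - round x) ^ 2 ≤ 1 - Real.cos (2 * Real.pi * x) := by
  set y := x - round x with hy
  have hcos : Real.cos (2 * Real.pi * x) = Real.cos (2 * Real.pi * y) := by
    rw [← Real.cos_sub_int_mul_two_pi (2 * Real.pi * x) (round x), hy]
    ring_nf
  have hsmall : |2 * Real.pi * y| ≤ Real.pi := by
    rw [abs_mul, abs_of_pos Real.two_pi_pos]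
    nlinarith [Real.pi_pos, abs_sub_round x]
  have hjordan := Real.cos_le_one_sub_mul_cos_sq hsmall
  have hscale : 2 / Real.pi ^ 2 * (2 * Real.pi * y) ^ 2 = 8 * y ^ 2 := by
    field_simp
    ring
  linarith

theorem exists_dist_le_of_torusGap_le {a p : ι → ℝ} {r : ℝ} (hr : 0 ≤ r)
    (h : torusGap a p ≤ 8 * r ^ 2) : ∃ l : ι → ℤ, dist (fun i => a i + l i) p ≤ r := by
  refine ⟨fun i => round (p i - a i), (dist_pi_le_iff hr).2 fun i => ?_⟩
  have hcoord : 8 * (p i - a i - round (p i - a i)) ^ 2 ≤ 8 * r ^ 2 :=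
    (eight_mul_sub_round_sq_le _).trans <| (Finset.single_le_sum
      (f := fun i => 1 - Real.cos (2 * Real.pi * (p i - a i)))
      (fun i _ => sub_nonneg.2 (Real.cos_le_one _)) (Finset.mem_univ i)).trans h
  rw [dist_comm, Real.dist_eq, ← sub_sub]
  exact abs_le_of_sq_le_sq (by linarith) hr

theorem exists_finset_forall_torusGap_lt {ε : ℝ} (hε : 0 < ε) :
    ∃ A : Finset (ι → ℝ), ∀ p, ∃ a ∈ A, torusGap a p < ε := by
  obtain ⟨A, -, hA⟩ := (isCompact_Icc (a := (0 : ι → ℝ)) (b := 1)).elim_nhds_subcover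
    (fun a => {p | torusGap a p < ε}) fun a _ =>
      (isOpen_lt (contDiff_torusGap a (n := 0)).continuous continuous_const).mem_nhds
        (by simpa [torusGap_self] using hε)
  refine ⟨A, fun p => ?_⟩
  obtain ⟨a, ha, hap⟩ := Set.mem_iUnion₂.1 <|
    hA (a := fun i => Int.fract (p i))
      ⟨fun i => Int.fract_nonneg _, fun i => (Int.fract_lt_one _).le⟩
  have hfract := intPeriodic_torusGap a (fun i => Int.fract (p i)) fun i => ⌊p i⌋
  simp only [Int.fract_add_floor] at hfract
  exact ⟨a, ha, hfract.trans_lt hap⟩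

end TorusGap

/-- A smooth partition of unity on the torus `(ℝ/ℤ)^ι` of mesh `r`: every point of the support of
the bump with index `a` lies within `r` of a lattice translate of `a`. Indexing the bumps by points
lets a function be sampled at the centers. -/
structure PeriodicPartition (ι : Type*) [Fintype ι] (r : ℝ) where
  centers : Finset (ι → ℝ)
  bump : (ι → ℝ) → (ι → ℝ) → ℝ
  contDiff_bump : ∀ a, ContDiff ℝ (⊤ : ℕ∞) (bump a)
  intPeriodic_bump : ∀ a, IntPeriodic (bump a)
  bump_nonneg : ∀ a p, 0 ≤ bump a p
  sum_bump : ∀ p, ∑ a ∈ centers, bump a p = 1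
  exists_dist_le_of_mem_tsupport : ∀ {a p}, p ∈ tsupport (bump a) →
    ∃ l : ι → ℤ, dist (fun i => a i + l i) p ≤ r

theorem nonempty_periodicPartition [Fintype ι] {r : ℝ} (hr : 0 < r) :
    Nonempty (PeriodicPartition ι r) := by
  obtain ⟨A, hA⟩ := exists_finset_forall_torusGap_lt (ι := ι) (ε := 8 * r ^ 2) (by positivity)
  let θ : (ι → ℝ) → (ι → ℝ) → ℝ := fun a p => expNegInvGlue (8 * r ^ 2 - torusGap a p)
  have hθ_smooth : ∀ a, ContDiff ℝ (⊤ : ℕ∞) (θ a) := fun a =>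
    (expNegInvGlue.contDiff (n := ⊤)).comp (contDiff_const.sub (contDiff_torusGap a))
  have hθ_per : ∀ a, IntPeriodic (θ a) := fun a p l =>
    congrArg (fun t => expNegInvGlue (8 * r ^ 2 - t)) (intPeriodic_torusGap a p l)
  have hsum_pos : ∀ p, 0 < ∑ a ∈ A, θ a p := by
    intro p
    obtain ⟨a, ha, hap⟩ := hA p
    exact Finset.sum_pos' (fun a _ => expNegInvGlue.nonneg _)
      ⟨a, ha, expNegInvGlue.pos_of_pos (sub_pos.2 hap)⟩
  refine ⟨⟨A, fun a p => θ a p / ∑ b ∈ A, θ b p, fun a => ?_, fun a p l => ?_, fun a p => ?_,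
    fun p => ?_, fun {a p} hp => ?_⟩⟩
  · exact (hθ_smooth a).div (ContDiff.sum fun b _ => hθ_smooth b) fun p => (hsum_pos p).ne'
  · simp only [hθ_per _ p l]
  · exact div_nonneg (expNegInvGlue.nonneg _) (hsum_pos p).le
  · rw [← Finset.sum_div, div_self (hsum_pos p).ne']
  · have hsupport : support (fun p => θ a p / ∑ b ∈ A, θ b p) ⊆ {p | torusGap a p ≤ 8 * r ^ 2} := by
      intro q hq
      by_contra hlt
      exact hq (by simp [θ, expNegInvGlue.zero_of_nonpos (sub_nonpos.2 (not_le.1 hlt).le)])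
    exact exists_dist_le_of_torusGap_le hr.le <| closure_minimal hsupport
      (isClosed_le (contDiff_torusGap a (n := 0)).continuous continuous_const) hp

section Symmetrization

/-- The product wave function `f₁ ⊗ ⋯ ⊗ f_n` of a tuple of one-particle functions. -/
def productState [Fintype κ] (f : κ → X → ℂ) (p : κ → X) : ℂ :=
  ∏ k, f k (p k)

variable [Fintype κ] [DecidableEq κ]

/-- The projection onto the symmetric functions: the average over all permutations of the
particles. -/
noncomputable def symmetrization (H : (κ → X) → ℂ) (p : κ → X) : ℂ :=
  (Fintype.card (Equiv.Perm κ) : ℂ)⁻¹ * ∑ σ : Equiv.Perm κ, H (p ∘ σ)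

theorem symmetrization_eq_self {G : (κ → X) → ℂ}
    (hG : ∀ (σ : Equiv.Perm κ) (p : κ → X), G (p ∘ σ) = G p) : symmetrization G = G := by
  funext p
  simp [symmetrization, hG, Nat.factorial_ne_zero, Fintype.card_perm]

theorem norm_symmetrization_le {H : (κ → X) → ℂ} {C : ℝ} (hH : ∀ p, ‖H p‖ ≤ C) (p : κ → X) :
    ‖symmetrization H p‖ ≤ C := by
  rw [symmetrization, norm_mul, norm_inv, Complex.norm_natCast,
    inv_mul_le_iff₀ (by exact_mod_cast Fintype.card_pos), ← nsmul_eq_mul, ← Finset.card_univ,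
    ← Finset.sum_const]
  exact norm_sum_le_of_le (n := fun _ => C) _ fun σ _ => hH _

theorem continuous_symmetrization [TopologicalSpace X] {H : (κ → X) → ℂ} (hH : Continuous H) :
    Continuous (symmetrization H) := by
  unfold symmetrization
  fun_prop

theorem tendsto_symmetrization {α : Type*} {l : Filter α} {H : α → (κ → X) → ℂ}
    {G : (κ → X) → ℂ} {p : κ → X}
    (h : ∀ σ : Equiv.Perm κ, Tendsto (fun j => H j (p ∘ σ)) l (𝓝 (G (p ∘ σ)))) :
    Tendsto (fun j => symmetrization (H j) p) l (𝓝 (symmetrization G p)) :=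
  (tendsto_finsetSum _ fun σ _ => h σ).const_mul _

theorem symmetrization_sum_smul_productState {J : Type*} [Fintype J] (c : J → ℂ)
    (f : J → κ → X → ℂ) (p : κ → X) :
    symmetrization (∑ j, c j • productState (f j)) p =
      ∑ j, (Fintype.card (Equiv.Perm κ) : ℂ)⁻¹ * c j *
        ∑ σ : Equiv.Perm κ, ∏ k, f j k (p (σ k)) := by
  simp only [symmetrization, Finset.sum_apply, Pi.smul_apply, smul_eq_mul, productState, comp_apply]
  rw [Finset.sum_comm, Finset.mul_sum]
  simp only [Finset.mul_sum, mul_assoc]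

end Symmetrization

/-- The velocity sets `V (supp f_k)` of a tuple of functions are pairwise disjoint. -/
def VelocitySeparated [TopologicalSpace X] [Zero E] (V : X → F) (f : κ → X → E) : Prop :=
  ∀ k l, k ≠ l → ∀ p ∈ tsupport (f k), ∀ q ∈ tsupport (f l), V p ≠ V q

/-- The tuples of smooth functions on the torus with pairwise disjoint velocity sets. -/
structure IsWavePacketTuple [Fintype ι] (V : (ι → ℝ) → F) (f : κ → (ι → ℝ) → ℂ) : Prop where
  contDiff : ∀ k, ContDiff ℝ (⊤ : ℕ∞) (f k)
  intPeriodic : ∀ k, IntPeriodic (f k)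
  velocitySeparated : VelocitySeparated V f

/-- The span of the product wave functions of tuples with pairwise disjoint velocity sets. -/
def wavePacketSpan [Fintype ι] [Fintype κ] (V : (ι → ℝ) → F) :
    Submodule ℂ ((κ → ι → ℝ) → ℂ) :=
  Submodule.span ℂ (productState '' {f | IsWavePacketTuple V f})

theorem continuous_of_mem_wavePacketSpan [Fintype ι] [Fintype κ] {V : (ι → ℝ) → F}
    {H : (κ → ι → ℝ) → ℂ} (hH : H ∈ wavePacketSpan V) : Continuous H := by
  induction hH using Submodule.span_induction with
  | mem H hH =>
    obtain ⟨f, hf, rfl⟩ := hH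
    exact continuous_finsetProd _ fun k _ => (hf.contDiff k).continuous.comp (continuous_apply k)
  | zero => exact continuous_const
  | add H K _ _ hH hK => exact hH.add hK
  | smul c H _ hH => exact hH.const_smul c

theorem isOpen_setOf_injective_comp [Finite κ] [TopologicalSpace X] [TopologicalSpace F] [T2Space F]
    {V : X → F} (hV : Continuous V) : IsOpen {p : κ → X | Injective (V ∘ p)} := by
  have hpairs : {p : κ → X | Injective (V ∘ p)} =
      ⋂ k, ⋂ l, ⋂ _ : k ≠ l, {p | V (p k) ≠ V (p l)} := by
    ext p
    simp only [Set.mem_iInter, Set.mem_ofPred_eq, injective_iff_pairwise_ne, Pairwise, onFun]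
    rfl
  rw [hpairs]
  exact isOpen_iInter_of_finite fun k => isOpen_iInter_of_finite fun l =>
    isOpen_iInter_of_finite fun _ =>
      isOpen_ne_fun (hV.comp (continuous_apply k)) (hV.comp (continuous_apply l))

namespace PeriodicPartition

variable [Fintype ι] {r : ℝ} (P : PeriodicPartition ι r)

theorem isWavePacketTuple_ofReal_bump {V : (ι → ℝ) → F} {a : κ → ι → ℝ}
    (ha : VelocitySeparated V fun k => P.bump (a k)) :
    IsWavePacketTuple V fun k p => (P.bump (a k) p : ℂ) where
  contDiff _ := Complex.ofRealCLM.contDiff.comp (P.contDiff_bump _)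
  intPeriodic _ p l := congrArg _ (P.intPeriodic_bump _ p l)
  velocitySeparated k l hkl p hp q hq :=
    ha k l hkl p (tsupport_comp_subset Complex.ofReal_zero _ hp) q
      (tsupport_comp_subset Complex.ofReal_zero _ hq)

variable [Fintype κ]

theorem sum_prod_bump [DecidableEq κ] (p : κ → ι → ℝ) :
    ∑ a ∈ Fintype.piFinset fun _ : κ => P.centers, ∏ k, P.bump (a k) (p k) = 1 := by
  rw [← Finset.prod_univ_sum (fun _ => P.centers) fun k a => P.bump a (p k)]
  simp [P.sum_bump]

open Classical in
/-- The value at a tuple of centers `a` of the function to be approximated; the tuples whose bumps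
are not velocity separated are dropped. -/
noncomputable def coefficient (V : (ι → ℝ) → F) (G : (κ → ι → ℝ) → ℂ) (a : κ → ι → ℝ) : ℂ :=
  if VelocitySeparated V fun k => P.bump (a k) then G a else 0

open Classical in
/-- The approximation of `G` by the velocity separated products of bumps, weighted by the values
of `G` at the centers. -/
noncomputable def approximant (V : (ι → ℝ) → F) (G : (κ → ι → ℝ) → ℂ) (p : κ → ι → ℝ) : ℂ :=
  ∑ a ∈ Fintype.piFinset fun _ : κ => P.centers,
    (∏ k, P.bump (a k) (p k)) • P.coefficient V G a

theorem approximant_mem_wavePacketSpan (V : (ι → ℝ) → F) (G : (κ → ι → ℝ) → ℂ) :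
    P.approximant V G ∈ wavePacketSpan V := by
  classical
  have hsum : P.approximant V G = ∑ a ∈ Fintype.piFinset fun _ : κ => P.centers,
      P.coefficient V G a • productState fun k p => (P.bump (a k) p : ℂ) := by
    funext p
    simp [approximant, productState, mul_comm]
  rw [hsum]
  refine Submodule.sum_mem _ fun a _ => ?_
  by_cases ha : VelocitySeparated V fun k => P.bump (a k)
  · exact Submodule.smul_mem _ _
      (Submodule.subset_span ⟨_, P.isWavePacketTuple_ofReal_bump ha, rfl⟩)
  · simp [coefficient, ha]

theorem approximant_mem_of_convex {V : (ι → ℝ) → F} {G : (κ → ι → ℝ) → ℂ} {p : κ → ι → ℝ}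
    {s : Set ℂ} (hs : Convex ℝ s)
    (h : ∀ a : κ → ι → ℝ, (∀ k, P.bump (a k) (p k) ≠ 0) → P.coefficient V G a ∈ s) :
    P.approximant V G p ∈ s := by
  classical
  let T := (Fintype.piFinset fun _ : κ => P.centers).filter fun a => ∏ k, P.bump (a k) (p k) ≠ 0
  have hT : P.approximant V G p = ∑ a ∈ T, (∏ k, P.bump (a k) (p k)) • P.coefficient V G a := by
    refine (Finset.sum_filter_of_ne fun a _ ha => ?_).symm
    exact left_ne_zero_of_smul ha
  rw [hT]
  refine hs.sum_mem (fun a _ => Finset.prod_nonneg fun k _ => P.bump_nonneg _ _) ?_ fun a ha => ?_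
  · rw [Finset.sum_filter_ne_zero, P.sum_prod_bump]
  · exact h a fun k => Finset.prod_ne_zero_iff.1 (Finset.mem_filter.1 ha).2 k (Finset.mem_univ k)

theorem norm_approximant_le {V : (ι → ℝ) → F} {G : (κ → ι → ℝ) → ℂ} {C : ℝ}
    (hC : ∀ p, ‖G p‖ ≤ C) (p : κ → ι → ℝ) : ‖P.approximant V G p‖ ≤ C := by
  have hball : P.approximant V G p ∈ Metric.closedBall (0 : ℂ) C := by
    refine P.approximant_mem_of_convex (convex_closedBall 0 C) fun a _ => ?_
    rw [mem_closedBall_zero_iff, coefficient]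
    split_ifs
    · exact hC a
    · simpa using (norm_nonneg _).trans (hC a)
  exact mem_closedBall_zero_iff.1 hball

theorem exists_translate_dist_le_two_mul {a x y : ι → ℝ} (hx : x ∈ tsupport (P.bump a))
    (hy : y ∈ tsupport (P.bump a)) :
    ∃ l : ι → ℤ, dist (fun i => x i + l i) y ≤ 2 * r := by
  obtain ⟨lx, hlx⟩ := P.exists_dist_le_of_mem_tsupport hx
  obtain ⟨ly, hly⟩ := P.exists_dist_le_of_mem_tsupport hy
  have hshift : dist (fun i => x i + (ly - lx) i) (fun i => a i + ly i : ι → ℝ) =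
      dist x (fun i => a i + lx i) := by
    rw [← dist_add_right x _ (fun i => ((ly - lx) i : ℝ))]
    congr 1
    ext i
    simp
  refine ⟨ly - lx, (dist_triangle _ (fun i => a i + ly i) _).trans ?_⟩
  rw [hshift, dist_comm]
  linarith

theorem velocitySeparated_bump {V : (ι → ℝ) → F} (hV : IntPeriodic V) {a p : κ → ι → ℝ}
    (hp : ∀ k, P.bump (a k) (p k) ≠ 0)
    (hsep : ∀ q : κ → ι → ℝ, dist q p ≤ 2 * r → Injective (V ∘ q)) :
    VelocitySeparated V fun k => P.bump (a k) := by
  classical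
  intro k k' hkk' x hx y hy
  obtain ⟨l, hl⟩ := P.exists_translate_dist_le_two_mul hx (subset_tsupport _ (hp k))
  obtain ⟨l', hl'⟩ := P.exists_translate_dist_le_two_mul hy (subset_tsupport _ (hp k'))
  have hr : 0 ≤ 2 * r := dist_nonneg.trans hl
  let q := update (update p k fun i => x i + l i) k' fun i => y i + l' i
  have hq : dist q p ≤ 2 * r := by
    refine (dist_pi_le_iff hr).2 fun j => ?_
    rcases eq_or_ne j k' with rfl | hjk'
    · simpa [q] using hl'
    rcases eq_or_ne j k with rfl | hjk
    · simpa [q, hjk'] using hl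
    · simpa [q, hjk, hjk'] using hr
  have hne : V (q k) ≠ V (q k') := (hsep q hq).ne hkk'
  simpa [q, hkk', hV x l, hV y l'] using hne

theorem dist_approximant_le {V : (ι → ℝ) → F} (hV : IntPeriodic V) {G : (κ → ι → ℝ) → ℂ}
    (hG : ∀ (p : κ → ι → ℝ) (l : κ → ι → ℤ), G (fun k i => p k i + l k i) = G p)
    {p : κ → ι → ℝ} {η : ℝ} (hr : 0 ≤ r) (hη : ∀ q, dist q p ≤ r → dist (G q) (G p) ≤ η)
    (hsep : ∀ q : κ → ι → ℝ, dist q p ≤ 2 * r → Injective (V ∘ q)) :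
    dist (P.approximant V G p) (G p) ≤ η := by
  refine P.approximant_mem_of_convex (convex_closedBall (G p) η) fun a ha => ?_
  rw [coefficient, if_pos (P.velocitySeparated_bump hV ha hsep)]
  choose l hl using fun k => P.exists_dist_le_of_mem_tsupport (subset_tsupport _ (ha k))
  rw [← hG a l]
  exact hη _ ((dist_pi_le_iff hr).2 hl)

theorem tendsto_approximant [TopologicalSpace F] [T2Space F] {α : Type*} {u : Filter α}
    {r : α → ℝ} (P : ∀ j, PeriodicPartition ι (r j)) (hr₀ : ∀ j, 0 ≤ r j) (hr : Tendsto r u (𝓝 0))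
    {V : (ι → ℝ) → F} (hVc : Continuous V) (hV : IntPeriodic V) {G : (κ → ι → ℝ) → ℂ}
    (hGc : Continuous G)
    (hG : ∀ (p : κ → ι → ℝ) (l : κ → ι → ℤ), G (fun k i => p k i + l k i) = G p)
    {p : κ → ι → ℝ} (hp : Injective (V ∘ p)) :
    Tendsto (fun j => (P j).approximant V G p) u (𝓝 (G p)) := by
  refine Metric.nhds_basis_closedBall.tendsto_right_iff.2 fun η hη => ?_
  obtain ⟨ρ, hρ, hGρ⟩ := Metric.continuous_iff.1 hGc p η hη
  obtain ⟨ρ', hρ', hVρ'⟩ := Metric.isOpen_iff.1 (isOpen_setOf_injective_comp hVc) p hp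
  filter_upwards [hr.eventually_lt_const hρ, hr.eventually_lt_const (half_pos hρ')] with j hj hj'
  exact (P j).dist_approximant_le hV hG (hr₀ j) (fun q hq => (hGρ q (hq.trans_lt hj)).le)
    fun q hq => hVρ' (hq.trans_lt (by linarith))

end PeriodicPartition

theorem unifIntegrable_of_forall_norm_le {α J : Type*} [MeasurableSpace α] {μ : Measure α}
    [NormedAddCommGroup E] {q : ℝ≥0∞} (hq : 1 ≤ q) (hq' : q ≠ ∞) {f : J → α → E}
    (hf : ∀ j, AEStronglyMeasurable (f j) μ) {C : ℝ} (hC : ∀ j x, ‖f j x‖ ≤ C) :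
    UnifIntegrable f q μ := by
  refine unifIntegrable_of hq hq' hf fun ε _ => ⟨(C + 1).toNNReal, fun j => ?_⟩
  have hempty : {x | (C + 1).toNNReal ≤ ‖f j x‖₊} = ∅ := by
    ext x
    simpa [← NNReal.coe_lt_coe] using Or.inl ((hC j x).trans_lt (lt_add_one C))
  simp [hempty]

theorem exists_mem_wavePacketSpan_eLpNorm_sub_symmetrization_lt [Fintype ι] [Fintype κ]
    [DecidableEq κ] [TopologicalSpace F] [T2Space F] {V : (ι → ℝ) → F} (hVc : Continuous V)
    (hV : IntPeriodic V) {μ : Measure (κ → ι → ℝ)} [IsFiniteMeasure μ]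
    (hμ : ∀ᵐ p ∂μ, Injective (V ∘ p)) {q : ℝ≥0∞} (hq : 1 ≤ q) (hq' : q ≠ ∞)
    {G : (κ → ι → ℝ) → ℂ} (hGc : Continuous G)
    (hGsymm : ∀ (σ : Equiv.Perm κ) (p : κ → ι → ℝ), G (p ∘ σ) = G p)
    (hG : ∀ (p : κ → ι → ℝ) (l : κ → ι → ℤ), G (fun k i => p k i + l k i) = G p)
    {ε : ℝ≥0∞} (hε : 0 < ε) :
    ∃ H ∈ wavePacketSpan V, eLpNorm (G - symmetrization H) q μ < ε := by
  let r : ℕ → ℝ := fun N => 1 / ((N : ℝ) + 1)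
  have hr : ∀ N, 0 < r N := fun N => Nat.one_div_pos_of_nat
  let P : ∀ N, PeriodicPartition ι (r N) := fun N => (nonempty_periodicPartition (hr N)).some
  obtain ⟨C, hC⟩ := exists_norm_le_of_intPeriodic hGc hG
  have hspan : ∀ N, (P N).approximant V G ∈ wavePacketSpan V := fun N =>
    (P N).approximant_mem_wavePacketSpan V G
  have hmeas : ∀ N, AEStronglyMeasurable (symmetrization ((P N).approximant V G)) μ := fun N =>
    (continuous_symmetrization (continuous_of_mem_wavePacketSpan (hspan N))).aestronglyMeasurable
  have hbound : ∀ N p, ‖symmetrization ((P N).approximant V G) p‖ ≤ C := fun N =>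
    norm_symmetrization_le ((P N).norm_approximant_le hC)
  have hae : ∀ᵐ p ∂μ, Tendsto (fun N => symmetrization ((P N).approximant V G) p) atTop
      (𝓝 (G p)) := by
    filter_upwards [hμ] with p hp
    nth_rw 2 [← symmetrization_eq_self hGsymm]
    exact tendsto_symmetrization fun σ => PeriodicPartition.tendsto_approximant P
      (fun N => (hr N).le) tendsto_one_div_add_atTop_nhds_zero_nat hVc hV hGc hG
      (hp.comp σ.injective)
  have hGmem : MemLp G q μ :=
    MemLp.of_bound hGc.aestronglyMeasurable C (Eventually.of_forall hC)
  have hlim := tendsto_Lp_finite_of_tendsto_ae hq hq' hmeas hGmem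
    (unifIntegrable_of_forall_norm_le hq hq' hmeas hbound) hae
  obtain ⟨N, hN⟩ := (hlim.eventually_lt_const hε).exists
  exact ⟨_, hspan N, by rwa [eLpNorm_sub_comm]⟩

theorem stmt16_general [Fintype ι] [Fintype κ] [DecidableEq κ] [NormedAddCommGroup F]
    [NormedSpace ℝ F] {V : (ι → ℝ) → F} (hVper : IntPeriodic V) (hVan : ∀ p, AnalyticAt ℝ V p)
    (hVnc : ∃ p q, V p ≠ V q) {q : ℝ≥0∞} (hq : 1 ≤ q) (hq' : q ≠ ∞)
    (G : (κ → ι → ℝ) → ℂ) (hGc : Continuous G)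
    (hGsymm : ∀ (σ : Equiv.Perm κ) (p : κ → ι → ℝ), G (p ∘ σ) = G p)
    (hGper : ∀ (p : κ → ι → ℝ) (l : κ → ι → ℤ), G (fun k i => p k i + l k i) = G p)
    (δ : ℝ) (hδ : 0 < δ) :
    ∃ (N : ℕ) (c : Fin N → ℂ) (f : Fin N → κ → (ι → ℝ) → ℂ),
      (∀ j k, ContDiff ℝ (⊤ : ℕ∞) (f j k)) ∧ (∀ j k, IntPeriodic (f j k)) ∧
      (∀ j, VelocitySeparated V (f j)) ∧
      eLpNorm (fun p => G p - ∑ j, c j * ∑ σ : Equiv.Perm κ, ∏ k, f j k (p (σ k))) q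
        (volume.restrict {p | ∀ k i, p k i ∈ Set.Icc (0 : ℝ) 1}) < ENNReal.ofReal δ := by
  have hcube : {p : κ → ι → ℝ | ∀ k i, p k i ∈ Set.Icc (0 : ℝ) 1} = Set.Icc 0 1 := by
    ext p
    simp [Pi.le_def, forall_and]
  have hfinite : IsFiniteMeasure ((volume : Measure (κ → ι → ℝ)).restrict (Set.Icc 0 1)) :=
    isFiniteMeasure_restrict.2 isCompact_Icc.measure_lt_top.ne
  have hinj : ∀ᵐ p ∂(volume : Measure (κ → ι → ℝ)).restrict (Set.Icc 0 1), Injective (V ∘ p) :=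
    ae_restrict_of_ae (ae_injective_comp_of_analyticAt hVan hVnc)
  obtain ⟨H, hH, hHG⟩ := exists_mem_wavePacketSpan_eLpNorm_sub_symmetrization_lt
    (continuous_iff_continuousAt.2 fun p => (hVan p).continuousAt) hVper
    hinj hq hq' hGc hGsymm hGper (ENNReal.ofReal_pos.2 hδ)
  obtain ⟨N, c, g, rfl⟩ := Submodule.mem_span_set'.1 hH
  choose f hf hfg using fun j => (g j).2
  have hsum : (fun p => G p - ∑ j, (Fintype.card (Equiv.Perm κ) : ℂ)⁻¹ * c j *
      ∑ σ : Equiv.Perm κ, ∏ k, f j k (p (σ k))) = G - symmetrization (∑ j, c j • (g j).1) := by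
    simp only [← hfg]
    exact funext fun p => congrArg (G p - ·) (symmetrization_sum_smul_productState c f p).symm
  refine ⟨N, fun j => (Fintype.card (Equiv.Perm κ) : ℂ)⁻¹ * c j, f, fun j => (hf j).contDiff,
    fun j => (hf j).intPeriodic, fun j => (hf j).velocitySeparated, ?_⟩
  rw [hcube, hsum]
  exact hHG

/-- totality of well-separated wave packets in the `n`-particle
space.  If `m` is a non-constant real analytic function on the torus, then the
symmetrized products `(f₁⊗⋯⊗f_n)^{sym}` of smooth functions whose supports have
pairwise disjoint velocity sets (`∇m(supp f_k) ∩ ∇m(supp f_l) = ∅` for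
`k ≠ l`) are total in the symmetric subspace `Sym^n L²(𝕋^ν)`: every symmetric
(continuous, periodic) function can be `L²`-approximated by finite linear
combinations of such symmetrized products. -/
theorem stmt16
    {ν n : ℕ}
    (m : (Fin ν → ℝ) → ℝ)
    (hmper : ∀ (p : Fin ν → ℝ) (k : Fin ν → ℤ), m (fun i => p i + k i) = m p)
    (hman : ∀ p, AnalyticAt ℝ m p)
    (hmnc : ∃ p q, m p ≠ m q) :
    ∀ (G : (Fin n → Fin ν → ℝ) → ℂ), Continuous G →
      (∀ (σ : Equiv.Perm (Fin n)) (p : Fin n → Fin ν → ℝ), G (p ∘ σ) = G p) →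
      (∀ (p : Fin n → Fin ν → ℝ) (k : Fin n → Fin ν → ℤ),
        G (fun a i => p a i + k a i) = G p) →
      ∀ δ : ℝ, 0 < δ →
      ∃ (N : ℕ) (c : Fin N → ℂ) (f : Fin N → Fin n → (Fin ν → ℝ) → ℂ),
        (∀ j k, ContDiff ℝ (⊤ : ℕ∞) (f j k)) ∧
        (∀ j k (p : Fin ν → ℝ) (l : Fin ν → ℤ),
          f j k (fun i => p i + l i) = f j k p) ∧
        (∀ j, ∀ k l, k ≠ l → ∀ p ∈ tsupport (f j k), ∀ q ∈ tsupport (f j l),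
          fderiv ℝ m p ≠ fderiv ℝ m q) ∧
        eLpNorm
          (fun p : Fin n → Fin ν → ℝ =>
            G p - ∑ j, c j * ∑ σ : Equiv.Perm (Fin n), ∏ k, f j k (p (σ k)))
          2 ((volume : Measure (Fin n → Fin ν → ℝ)).restrict
              {p | ∀ a i, p a i ∈ Set.Icc (0:ℝ) 1})
          < ENNReal.ofReal δ :=
  stmt16_general (IntPeriodic.intPeriodic_fderiv hmper) (fun p => (hman p).fderiv)
    (IntPeriodic.exists_fderiv_ne hmper (fun p => (hman p).differentiableAt) hmnc) one_le_two
    ENNReal.ofNat_ne_top
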